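/- Let A be a σ-unital simple C*-algebra with QT̃(A) ≠ {0} which has strict comparison and surjective canonical map Γ, and let S ⊆ QT̃(A)\{0} be a compact subset such that ℝ₊·S = QT̃(A). If x ∈ A⊗K satisfies sup{d_τ(x*x) : τ ∈ S} < ∞, then x ∈ Ped(A⊗K). -/

import Mathlib

open scoped ENNReal
open Filter Topology

noncomputable section

namespace Paper

/-! ### Generic definitions in a (non-unital) C*-algebra -/

variable (R : Type*) [NonUnitalCStarAlgebra R] [PartialOrder R] [StarOrderedRing R]

variable {R} in
/-- The hereditary C*-subalgebra generated by `b`, i.e. `closure (b R b)`. -/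
def her (b : R) : Set R := closure {x : R | ∃ y : R, x = b * y * b}

/-- `I` is a (not necessarily closed) two-sided ideal of the subalgebra `B`. -/
def IsIdealIn (B I : Set R) : Prop :=
  I ⊆ B ∧ (0 : R) ∈ I ∧ (∀ x ∈ I, ∀ y ∈ I, x + y ∈ I) ∧ (∀ x ∈ I, -x ∈ I) ∧
    (∀ x ∈ I, ∀ b ∈ B, x * b ∈ I ∧ b * x ∈ I)

variable {R} in
/-- The Pedersen ideal of the subalgebra `B`: the minimal dense two-sided ideal of `B`,
equivalently the intersection of all dense two-sided ideals of `B`. -/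
def pedersenIn (B : Set R) : Set R :=
  ⋂ I ∈ {I : Set R | IsIdealIn R B I ∧ B ⊆ closure I}, I

/-- The Pedersen ideal of `R`. -/
def pedersen : Set R := pedersenIn (Set.univ : Set R)

variable {R} in
/-- Cuntz subequivalence `a ≲ b`. -/
def CuntzLE (a b : R) : Prop :=
  ∃ x : ℕ → R, Tendsto (fun n => ‖a - star (x n) * b * x n‖) atTop (𝓝 0)

variable {R} in
/-- Cuntz subequivalence relative to a subset `B` (the `xₙ` are taken in `B`). -/
def CuntzLEIn (B : Set R) (a b : R) : Prop :=
  ∃ x : ℕ → R, (∀ n, x n ∈ B) ∧ Tendsto (fun n => ‖a - star (x n) * b * x n‖) atTop (𝓝 0)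

variable {R} in
/-- Cuntz equivalence `a ∼ b`. -/
def CuntzEq (a b : R) : Prop := CuntzLE a b ∧ CuntzLE b a

/-- The cut-off function `f_ε`: `0` on `[0, ε/2]`, `1` on `[ε, ∞)`, linear in between. -/
def cutoff (ε : ℝ) : ℝ → ℝ := fun t => min 1 (max 0 (2 * t / ε - 1))

variable {R} in
/-- `f_ε(a)`, via the (non-unital) continuous functional calculus. -/
def fEps (ε : ℝ) (a : R) : R := cfcₙ (cutoff ε) a

/-- A densely defined 2-quasitrace on `R` (recorded by its values on positive elements;
the value on non-positive elements is normalised to `0`). -/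
structure QuasiTrace : Type _ where
  toFun : R → ℝ≥0∞
  zero_of_not_nonneg : ∀ a : R, ¬ (0 ≤ a) → toFun a = 0
  map_zero : toFun 0 = 0
  map_smul : ∀ (r : ℝ) (a : R), 0 < r → 0 ≤ a → toFun (r • a) = ENNReal.ofReal r * toFun a
  map_add_of_commute : ∀ a b : R, 0 ≤ a → 0 ≤ b → a * b = b * a →
    toFun (a + b) = toFun a + toFun b
  map_star_mul_self : ∀ x : R, toFun (star x * x) = toFun (x * star x)
  lowerSemicontinuousOn : LowerSemicontinuousOn toFun {a : R | 0 ≤ a}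
  finite_on_pedersen : ∀ a ∈ pedersen R, 0 ≤ a → toFun a < ∞
  exists_matrix_extension : ∃ σ : Matrix (Fin 2) (Fin 2) R → ℝ≥0∞,
    (∀ a : R, σ (fun i j => if i = 0 ∧ j = 0 then a else 0) = toFun a) ∧
    σ 0 = 0 ∧
    (∀ (r : ℝ) (x : Matrix (Fin 2) (Fin 2) R), 0 < r → (∃ y, x = star y * y) →
      σ (r • x) = ENNReal.ofReal r * σ x) ∧
    (∀ x y : Matrix (Fin 2) (Fin 2) R, (∃ z, x = star z * z) → (∃ z, y = star z * z) →
      x * y = y * x → σ (x + y) = σ x + σ y) ∧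
    (∀ x : Matrix (Fin 2) (Fin 2) R, σ (star x * x) = σ (x * star x))

/-- The topology of pointwise convergence on the Pedersen ideal. -/
instance : TopologicalSpace (QuasiTrace R) :=
  TopologicalSpace.induced (fun τ => fun a : pedersen R => τ.toFun a) inferInstance

variable {R}

/-- The zero quasitrace. -/
def QuasiTrace.IsZero (τ : QuasiTrace R) : Prop := ∀ a : R, τ.toFun a = 0

/-- The dimension function `d_τ(a) = lim_{ε → 0} τ(f_ε(a))`. -/
def dTau (τ : QuasiTrace R) (a : R) : ℝ≥0∞ :=
  ⨆ n : ℕ, τ.toFun (fEps (1 / (n + 1)) a)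

/-- `ω(a)` relative to a set `S` of quasitraces:
`lim_n sup {d_τ(a) - τ(f_{1/n}(a)) : τ ∈ S}`. -/
def omegaOn (S : Set (QuasiTrace R)) (a : R) : ℝ≥0∞ :=
  ⨅ n : ℕ, ⨆ τ ∈ S, (dTau τ a - τ.toFun (fEps (1 / (n + 1)) a))

/-- The seminorm `‖x‖_{2,S}`. -/
def norm2On (S : Set (QuasiTrace R)) (x : R) : ℝ≥0∞ :=
  ⨆ τ ∈ S, (τ.toFun (star x * x)) ^ (1 / 2 : ℝ)

variable (R)

/-- `R` has (Blackadar's) strict comparison. -/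
def StrictComparison : Prop :=
  ∀ a b : R, 0 ≤ a → 0 ≤ b →
    (∀ τ : QuasiTrace R, ¬ τ.IsZero → dTau τ a < dTau τ b) → CuntzLE a b

/-- `R` is a simple C*-algebra: it is nonzero and has no nontrivial closed two-sided ideals. -/
def IsSimpleCStar : Prop :=
  (∃ x : R, x ≠ 0) ∧
    ∀ I : TwoSidedIdeal R, IsClosed (I : Set R) → (I : Set R) = {0} ∨ (I : Set R) = Set.univ

/-- `R` is σ-unital: it contains a strictly positive element `h`
(equivalently, `Her(h) = R`). -/
def SigmaUnital : Prop := ∃ h : R, 0 ≤ h ∧ her h = Set.univ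

/-- `R` is elementary: isomorphic to the algebra of compact operators on some Hilbert space. -/
def IsElementary : Prop :=
  ∃ (H : Type) (_ : NormedAddCommGroup H) (_ : InnerProductSpace ℂ H) (_ : CompleteSpace H)
    (φ : R →⋆ₙₐ[ℂ] (H →L[ℂ] H)), Function.Injective φ ∧
      Set.range φ = {T : H →L[ℂ] H | IsCompactOperator (⇑T)}

/-- `R` is purely infinite: `R ≇ ℂ` and `b ≲ a` for all nonzero positive `a, b`. -/
def PurelyInfinite : Prop :=
  (¬ ∃ φ : R →⋆ₙₐ[ℂ] ℂ, Function.Bijective φ) ∧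
    ∀ a b : R, 0 ≤ a → 0 ≤ b → a ≠ 0 → b ≠ 0 → CuntzLE b a

/-- `R` is finite: its minimal unitization contains no non-unitary isometry. -/
def IsFiniteCStar : Prop :=
  ∀ v : Unitization ℂ R, star v * v = 1 → v * star v = 1

/-- `R` has stable rank one: the invertible elements are dense in the minimal unitization. -/
def StableRankOne : Prop := Dense {x : Unitization ℂ R | IsUnit x}

variable {R}

/-- `c` represents `n·[a]` in the Cuntz semigroup: it is the sum of `n` mutually
orthogonal positive elements, each Cuntz equivalent to `a`. -/
def IsNFoldRep (n : ℕ) (a c : R) : Prop :=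
  ∃ f : Fin n → R, (∀ i, 0 ≤ f i) ∧ (∀ i, CuntzEq (f i) a) ∧
    (∀ i j, i ≠ j → f i * f j = 0) ∧ c = ∑ i, f i

/-- `s` represents the supremum of the increasing sequence of Cuntz classes `[y n]`. -/
def IsCuntzLUB (y : ℕ → R) (s : R) : Prop :=
  (∀ n, CuntzLE (y n) s) ∧ ∀ c : R, 0 ≤ c → (∀ n, CuntzLE (y n) c) → CuntzLE s c

/-- `[x] ≪ [y]` in the Cuntz semigroup. -/
def CuntzWayBelow (x y : R) : Prop :=
  ∀ yseq : ℕ → R, (∀ n, 0 ≤ yseq n) → (∀ n, CuntzLE (yseq n) (yseq (n + 1))) →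
    ∀ s : R, 0 ≤ s → IsCuntzLUB yseq s → CuntzLE y s → ∃ n₀, CuntzLE x (yseq n₀)

variable (R)

/-- The Cuntz semigroup of `R` is almost unperforated. -/
def AlmostUnperforated : Prop :=
  ∀ (a b : R) (k : ℕ), 1 ≤ k → 0 ≤ a → 0 ≤ b →
    (∃ c d : R, IsNFoldRep (k + 1) a c ∧ IsNFoldRep k b d ∧ CuntzLE c d) → CuntzLE a b

/-- The Cuntz semigroup of `R` is almost divisible. -/
def AlmostDivisible : Prop :=
  ∀ x y : R, 0 ≤ x → 0 ≤ y → CuntzWayBelow x y → ∀ n : ℕ, 1 ≤ n →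
    ∃ z : R, 0 ≤ z ∧ (∃ c : R, IsNFoldRep n z c ∧ CuntzLE c y) ∧
      (∃ c : R, IsNFoldRep (n + 1) z c ∧ CuntzLE x c)

/-! ### The stabilization `W ≅ A ⊗ K` -/

variable (A W : Type*) [NonUnitalCStarAlgebra A] [PartialOrder A] [StarOrderedRing A]
  [NonUnitalCStarAlgebra W] [PartialOrder W] [StarOrderedRing W]

/-- A realization of `W` as the stabilization `A ⊗ K`: the maps `emb i j : a ↦ a ⊗ e_{ij}`
are isometric, satisfy the matrix-unit relations, and have dense joint linear span. -/
structure Stabilization : Type _ where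
  emb : ℕ → ℕ → (A →ₗ[ℂ] W)
  emb_mul : ∀ (i j k l : ℕ) (a b : A),
    emb i j a * emb k l b = if j = k then emb i l (a * b) else 0
  emb_star : ∀ (i j : ℕ) (a : A), star (emb i j a) = emb j i (star a)
  norm_emb : ∀ (i j : ℕ) (a : A), ‖emb i j a‖ = ‖a‖
  dense_span : Dense (Submodule.span ℂ {w : W | ∃ (i j : ℕ) (a : A), w = emb i j a} : Set W)

variable {A W}

/-- The set `QT(A)` of quasitraces normalized on `A ⊆ A ⊗ K`. -/
def QTSet (SB : Stabilization A W) : Set (QuasiTrace W) :=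
  {τ | (⨆ a : {a : A // 0 ≤ a ∧ ‖a‖ ≤ 1}, τ.toFun (SB.emb 0 0 a)) = 1}

/-- The quasitraces normalized on the hereditary subalgebra `Her(c) ⊆ W`. -/
def QTSetHer (c : W) : Set (QuasiTrace W) :=
  {τ : QuasiTrace W |
    (⨆ a : {a : W // a ∈ her c ∧ 0 ≤ a ∧ ‖a‖ ≤ 1}, τ.toFun a) = 1}

/-- `ω(a) = 0` for `a ∈ W = A ⊗ K`, computed relative to `\overline{QT(Her(e))}^w`
for any nonzero `e ∈ Ped(A)₊`. -/
def OmegaZero (SB : Stabilization A W) (a : W) : Prop :=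
  ∀ e : A, 0 ≤ e → e ≠ 0 → e ∈ pedersen A →
    omegaOn (closure (QTSetHer (SB.emb 0 0 e))) a = 0

/-- `A` has tracial approximate oscillation zero. -/
def TAOZ (SB : Stabilization A W) : Prop :=
  ∀ e : A, 0 ≤ e → e ≠ 0 → e ∈ pedersen A →
    ∀ a : W, 0 ≤ a → a ∈ pedersen W →
      ∃ b : ℕ → W, (∀ n, 0 ≤ b n) ∧ (∀ n, ‖b n‖ ≤ 1) ∧
        (∀ n, b n ∈ pedersenIn (her a)) ∧
        Tendsto (fun n => omegaOn (closure (QTSetHer (SB.emb 0 0 e))) (b n)) atTop (𝓝 0) ∧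
        Tendsto (fun n => norm2On (closure (QTSetHer (SB.emb 0 0 e))) (a - b n)) atTop (𝓝 0)

/-! ### Affine functions on the quasitrace cone and the map `Γ` -/

variable (W) in
/-- `ρ = t·τ + (1-t)·σ` as quasitraces. -/
def IsCombo (t : ℝ) (τ σ ρ : QuasiTrace W) : Prop :=
  ∀ a : W, 0 ≤ a →
    ρ.toFun a = ENNReal.ofReal t * τ.toFun a + ENNReal.ofReal (1 - t) * σ.toFun a

variable (W) in
/-- `f` is affine on the quasitrace cone. -/
def IsAffineQT (f : QuasiTrace W → ℝ≥0∞) : Prop :=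
  ∀ t : ℝ, 0 ≤ t → t ≤ 1 → ∀ τ σ ρ : QuasiTrace W, IsCombo W t τ σ ρ →
    f ρ = ENNReal.ofReal t * f τ + ENNReal.ofReal (1 - t) * f σ

variable (W) in
/-- Membership in `Aff₊(QT̃(A))`. -/
def MemAffPlus (f : QuasiTrace W → ℝ≥0∞) : Prop :=
  (∀ τ, f τ = 0) ∨
    (Continuous f ∧ IsAffineQT W f ∧ (∀ τ, f τ < ∞) ∧
      (∀ τ : QuasiTrace W, ¬ τ.IsZero → 0 < f τ) ∧
      (∀ τ : QuasiTrace W, τ.IsZero → f τ = 0))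

variable (W) in
/-- Membership in `LAff₊(QT̃(A))`. -/
def MemLAffPlus (f : QuasiTrace W → ℝ≥0∞) : Prop :=
  ∃ g : ℕ → QuasiTrace W → ℝ≥0∞, (∀ n, MemAffPlus W (g n)) ∧
    (∀ n τ, g n τ ≤ g (n + 1) τ) ∧ ∀ τ, f τ = ⨆ n, g n τ

variable (W) in
/-- The canonical map `Γ : Cu(A) → LAff₊(QT̃(A))`, `Γ([a])(τ) = d_τ(a)`, is surjective. -/
def GammaSurjective : Prop :=
  ∀ f : QuasiTrace W → ℝ≥0∞, MemLAffPlus W f →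
    ∃ a : W, 0 ≤ a ∧ ∀ τ : QuasiTrace W, dTau τ a = f τ

/-
Write `x = ∑ₖ x gₖ + x f_ε(x* x)`, where the `gₖ` are consecutive bump functions of `x* x` on a
geometrically decreasing scale, so that `‖x gₖ‖` decays geometrically. The dimensions of slightly
wider bumps sum to at most twice `d_τ(x* x)`, which is bounded on `S`. By simplicity and compactness
some `r` supported under an element `f` of the Pedersen ideal has larger rank than this uniformly on
`S`. Rank is subadditive, so after finitely many pieces have been split off from `r` the remainder
still has rank exceeding `d_τ(x* x)`; strict comparison then provides a piece `yₖ` of it together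
with `Yₖ` such that `gₖ yₖ* Yₖ = gₖ`. An oblique projection makes what is left orthogonal to `yₖ`,
whence `yⱼ* Yₖ = 0` for `j ≠ k`. Therefore `Z = ∑ 2ᵏ x gₖ yₖ*` and `T = ∑ 2⁻ᵏ Yₖ` satisfy `x = Z T +
x f_ε(x* x)`, and `T = f T` lies in the Pedersen ideal.
-/

open scoped NNReal

section QuasiInverse

lemma norm_quasiInverse_le {B : Type*} [NonUnitalNormedRing B] {d d' : B} {r : ℝ}
    (h : d + d' + d * d' = 0) (hd : ‖d‖ ≤ r) (hr : r < 1) : ‖d'‖ ≤ r / (1 - r) := by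
  have hd' : d' = -d - d * d' := by
    rw [← sub_eq_zero, ← h]
    abel
  have hle : ‖d'‖ ≤ r + r * ‖d'‖ := calc
    ‖d'‖ = ‖-d - d * d'‖ := congrArg norm hd'
    _ ≤ ‖d‖ + ‖d‖ * ‖d'‖ := by
      simpa only [norm_neg] using (norm_sub_le (-d) (d * d')).trans
        (add_le_add_right (norm_mul_le d d') _)
    _ ≤ r + r * ‖d'‖ := by gcongr
  rw [le_div_iff₀ (by linarith)]
  linarith

lemma exists_quasiInverse {B : Type*} [NonUnitalCStarAlgebra B] {d : B} (hd : ‖d‖ < 1) :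
    ∃ d' : B, d + d' + d * d' = 0 := by
  have hnorm : ‖-(d : Unitization ℂ B)‖ < 1 := by rwa [norm_neg, Unitization.norm_inr]
  have hunit := isUnit_one_sub_of_norm_lt_one hnorm
  rw [sub_neg_eq_add, ← isQuasiregular_iff_isUnit' ℂ, isQuasiregular_iff] at hunit
  obtain ⟨d', h, -⟩ := hunit
  exact ⟨d', by rw [add_comm d, h]⟩

end QuasiInverse

variable {B : Type*} [NonUnitalCStarAlgebra B]

section Pedersen

lemma pedersen_mul_right {f : B} (hf : f ∈ pedersen B) (b : B) : f * b ∈ pedersen B := by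
  simp only [pedersen, pedersenIn, Set.mem_iInter] at hf ⊢
  exact fun I hI => (hI.1.2.2.2.2 f (hf I hI) b (Set.mem_univ b)).1

lemma pedersen_mul_left {f : B} (hf : f ∈ pedersen B) (b : B) : b * f ∈ pedersen B := by
  simp only [pedersen, pedersenIn, Set.mem_iInter] at hf ⊢
  exact fun I hI => (hI.1.2.2.2.2 f (hf I hI) b (Set.mem_univ b)).2

lemma pedersen_add {f g : B} (hf : f ∈ pedersen B) (hg : g ∈ pedersen B) :
    f + g ∈ pedersen B := by
  simp only [pedersen, pedersenIn, Set.mem_iInter] at hf hg ⊢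
  exact fun I hI => hI.1.2.2.1 f (hf I hI) g (hg I hI)

/-
Approximating `a` by an element `b` of a dense ideal makes `f * (b * h)` an invertible
perturbation `f * (1 + d)` of `f`.
-/
lemma mem_pedersen_of_mul_eq_self {f a h : B} (hf : f * (a * h) = f) : f ∈ pedersen B := by
  simp only [pedersen, pedersenIn, Set.mem_iInter]
  rintro I ⟨⟨-, -, hadd, -, hmul⟩, hdense⟩
  obtain ⟨b, hbI, hb⟩ := Metric.mem_closure_iff.1 (hdense (Set.mem_univ a)) (1 / (‖h‖ + 1))
    (by positivity)
  have hd : ‖(b - a) * h‖ < 1 := calc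
    ‖(b - a) * h‖ ≤ ‖b - a‖ * ‖h‖ := norm_mul_le _ _
    _ ≤ 1 / (‖h‖ + 1) * ‖h‖ := by
      gcongr
      rw [norm_sub_rev, ← dist_eq_norm]
      exact hb.le
    _ < 1 := by
      rw [div_mul_eq_mul_div, one_mul, div_lt_one (by positivity)]
      exact lt_add_one _
  obtain ⟨d', hd'⟩ := exists_quasiInverse hd
  have hfbh : f * b * h = f + f * ((b - a) * h) := by
    rw [sub_mul, mul_sub, hf, add_sub_cancel, mul_assoc]
  have hfactor : f = f * b * h + f * b * h * d' := calc
    f = f + f * ((b - a) * h + d' + (b - a) * h * d') := by rw [hd', mul_zero, add_zero]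
    _ = f * b * h + f * b * h * d' := by
      rw [hfbh, mul_add, mul_add, add_mul, mul_assoc f]
      abel
  have hfbhI : f * b * h ∈ I :=
    (hmul _ (hmul b hbI f (Set.mem_univ f)).2 h (Set.mem_univ h)).1
  rw [hfactor]
  exact hadd _ hfbhI _ (hmul _ hfbhI d' (Set.mem_univ d')).1

end Pedersen

section Cutoff

@[fun_prop]
lemma continuous_cutoff (ε : ℝ) : Continuous (cutoff ε) := by
  unfold cutoff
  fun_prop

lemma cutoff_nonneg (ε t : ℝ) : 0 ≤ cutoff ε t := by
  unfold cutoff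
  positivity

lemma cutoff_le_one (ε t : ℝ) : cutoff ε t ≤ 1 := min_le_left _ _

@[simp]
lemma cutoff_zero (ε : ℝ) : cutoff ε 0 = 0 := by
  simp [cutoff]

lemma cutoff_eq_zero {ε t : ℝ} (hε : 0 < ε) (h : t ≤ ε / 2) : cutoff ε t = 0 := by
  have hle : 2 * t / ε - 1 ≤ 0 := by
    rw [sub_nonpos, div_le_one hε]
    linarith
  rw [cutoff, max_eq_left hle, min_eq_right zero_le_one]

lemma cutoff_eq_one {ε t : ℝ} (hε : 0 < ε) (h : ε ≤ t) : cutoff ε t = 1 := by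
  have hle : 1 ≤ 2 * t / ε - 1 := by
    rw [le_sub_iff_add_le, le_div_iff₀ hε]
    linarith
  exact min_eq_left (le_max_of_le_right hle)

/-- The function `t ↦ (f_ε(t) / t)^{1/2}`. Since `f_ε` vanishes on `[0, ε / 2]`, the denominator
can be truncated there, which makes the function continuous. -/
def cutoffRoot (ε : ℝ) : ℝ → ℝ := fun t => √(cutoff ε t / max t (ε / 2))

lemma continuous_cutoffRoot {ε : ℝ} (hε : 0 < ε) : Continuous (cutoffRoot ε) := by
  refine ((continuous_cutoff ε).div (by fun_prop) fun t => ?_).sqrt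
  exact (lt_max_of_lt_right (half_pos hε)).ne'

@[simp]
lemma cutoffRoot_zero (ε : ℝ) : cutoffRoot ε 0 = 0 := by
  simp [cutoffRoot]

lemma cutoffRoot_mul_mul_cutoffRoot {ε : ℝ} (hε : 0 < ε) (t : ℝ) :
    cutoffRoot ε t * t * cutoffRoot ε t = cutoff ε t := by
  have hmax : 0 < max t (ε / 2) := lt_max_of_lt_right (half_pos hε)
  rw [mul_right_comm, cutoffRoot, Real.mul_self_sqrt (div_nonneg (cutoff_nonneg ε t) hmax.le)]
  rcases le_total t (ε / 2) with h | h
  · rw [cutoff_eq_zero hε h, zero_div, zero_mul]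
  · rw [max_eq_left h] at hmax ⊢
    exact div_mul_cancel₀ _ hmax.ne'

lemma norm_fEps_le_one (ε : ℝ) (a : B) : ‖fEps ε a‖ ≤ 1 :=
  norm_cfcₙ_le fun t _ => by
    rw [Real.norm_of_nonneg (cutoff_nonneg ε t)]
    exact cutoff_le_one ε t

@[simp]
lemma star_fEps (ε : ℝ) (a : B) : star (fEps ε a) = fEps ε a :=
  (cfcₙ_predicate (cutoff ε) a : IsSelfAdjoint _).star_eq

lemma continuous_fEps_star_mul_self (ε : ℝ) : Continuous fun x : B => fEps ε (star x * x) :=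
  Continuous.cfcₙ_of_mem_nhdsSet (s := Set.univ) (cutoff ε) Filter.univ_mem (by fun_prop)
    (fun x => IsSelfAdjoint.star_mul_self x) (continuous_cutoff ε).continuousOn (cutoff_zero ε)

lemma fEps_commute (δ ε : ℝ) (a : B) : Commute (fEps δ a) (fEps ε a) :=
  cfcₙ_commute_cfcₙ _ _ a

lemma fEps_mul_fEps {δ ε : ℝ} (hδ : 0 < δ) (h : δ ≤ ε / 2) (a : B) :
    fEps δ a * fEps ε a = fEps ε a := by
  unfold fEps
  rw [← cfcₙ_mul _ _ a]
  refine cfcₙ_congr fun t _ => ?_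
  rcases le_total t (ε / 2) with ht | ht
  · simp only [cutoff_eq_zero (by linarith : 0 < ε) ht, mul_zero]
  · simp only [cutoff_eq_one hδ (h.trans ht), one_mul]

lemma fEps_mul_fEps_of_le {δ ε : ℝ} (hδ : 0 < δ) (h : δ ≤ ε / 2) (a : B) :
    fEps ε a * fEps δ a = fEps ε a := by
  rw [(fEps_commute ε δ a).eq, fEps_mul_fEps hδ h]

/-- The element `h = (f_ε(t) / t)^{1/2}(a)`, through which `f_ε(a) = h a h`. -/
def fEpsRoot (ε : ℝ) (a : B) : B := cfcₙ (cutoffRoot ε) a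

@[simp]
lemma star_fEpsRoot (ε : ℝ) (a : B) : star (fEpsRoot ε a) = fEpsRoot ε a :=
  (cfcₙ_predicate (cutoffRoot ε) a : IsSelfAdjoint _).star_eq

variable [PartialOrder B] [StarOrderedRing B]

lemma fEps_nonneg (ε : ℝ) (a : B) : 0 ≤ fEps ε a :=
  cfcₙ_nonneg fun t _ => cutoff_nonneg ε t

lemma fEpsRoot_mul_mul_fEpsRoot {ε : ℝ} (hε : 0 < ε) {a : B} (ha : 0 ≤ a) :
    fEpsRoot ε a * a * fEpsRoot ε a = fEps ε a := by
  have hsa : IsSelfAdjoint a := ha.isSelfAdjoint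
  have hc := continuous_cutoffRoot hε
  calc fEpsRoot ε a * a * fEpsRoot ε a
      = cfcₙ (fun t => cutoffRoot ε t * t * cutoffRoot ε t) a := by
        rw [cfcₙ_mul (fun t => cutoffRoot ε t * t) (cutoffRoot ε) a,
          cfcₙ_mul (cutoffRoot ε) (fun t => t) a, cfcₙ_id' ℝ a, fEpsRoot]
    _ = fEps ε a := cfcₙ_congr fun t _ => cutoffRoot_mul_mul_cutoffRoot hε t

lemma fEps_mem_pedersen {ε : ℝ} (hε : 0 < ε) {a : B} (ha : 0 ≤ a) : fEps ε a ∈ pedersen B :=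
  mem_pedersen_of_mul_eq_self (a := fEpsRoot (ε / 2) a * a) (h := fEpsRoot (ε / 2) a) <| by
    rw [fEpsRoot_mul_mul_fEpsRoot (half_pos hε) ha, fEps_mul_fEps_of_le (half_pos hε) le_rfl]

lemma norm_sub_mul_fEps_sq_le {ε : ℝ} (hε : 0 < ε) (x : B) :
    ‖x - x * fEps ε (star x * x)‖ ^ 2 ≤ ε := by
  set a := star x * x with ha_def
  have ha : 0 ≤ a := star_mul_self_nonneg x
  have hsa : IsSelfAdjoint a := ha.isSelfAdjoint
  have hsq : star (x - x * fEps ε a) * (x - x * fEps ε a) =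
      cfcₙ (fun t => t - t * cutoff ε t - cutoff ε t * (t - t * cutoff ε t)) a := by
    rw [cfcₙ_sub (fun t => t - t * cutoff ε t) (fun t => cutoff ε t * (t - t * cutoff ε t)) a,
      cfcₙ_mul (cutoff ε) (fun t => t - t * cutoff ε t) a,
      cfcₙ_sub (fun t => t) (fun t => t * cutoff ε t) a,
      cfcₙ_mul (fun t => t) (cutoff ε) a, cfcₙ_id' ℝ a, ← fEps, star_sub, star_mul, star_fEps,
      ha_def]
    noncomm_ring
  rw [pow_two, ← CStarRing.norm_star_mul_self, hsq]
  refine norm_cfcₙ_le fun t ht => ?_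
  have ht0 : 0 ≤ t := quasispectrum_nonneg_of_nonneg a ha t ht
  have hfactor : t - t * cutoff ε t - cutoff ε t * (t - t * cutoff ε t) =
      t * (1 - cutoff ε t) ^ 2 := by ring
  rw [hfactor, Real.norm_of_nonneg (by positivity)]
  rcases le_total ε t with h | h
  · simp [cutoff_eq_one hε h, hε.le]
  · have hle : (1 - cutoff ε t) ^ 2 ≤ 1 :=
      pow_le_one₀ (sub_nonneg.2 (cutoff_le_one ε t)) (sub_le_self _ (cutoff_nonneg ε t))
    exact (mul_le_of_le_one_right ht0 hle).trans h

lemma tendsto_mul_fEps (x : B) :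
    Tendsto (fun n : ℕ => x * fEps (1 / (n + 1)) (star x * x)) atTop (𝓝 x) := by
  have hsqrt : Tendsto (fun n : ℕ => √(1 / ((n : ℝ) + 1))) atTop (𝓝 0) := by
    simpa using tendsto_one_div_add_atTop_nhds_zero_nat.sqrt
  refine tendsto_iff_norm_sub_tendsto_zero.2 <|
    squeeze_zero (fun _ => norm_nonneg _) (fun n => ?_) hsqrt
  rw [norm_sub_rev]
  exact Real.le_sqrt_of_sq_le (norm_sub_mul_fEps_sq_le (by positivity) x)

end Cutoff

section Rank

variable [PartialOrder B]

namespace QuasiTrace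

variable (τ : QuasiTrace B)

lemma toFun_le_of_tendsto {ι : Type*} {l : Filter ι} [l.NeBot] {u : ι → B} {F : B}
    (hu : ∀ i, 0 ≤ u i) (hF : 0 ≤ F) (h : Tendsto u l (𝓝 F)) {C : ℝ≥0∞}
    (hC : ∀ᶠ i in l, τ.toFun (u i) ≤ C) : τ.toFun F ≤ C := by
  by_contra! hlt
  have hlt' := (tendsto_nhdsWithin_iff.2 ⟨h, Eventually.of_forall hu⟩).eventually
    (τ.lowerSemicontinuousOn F hF C hlt)
  obtain ⟨i, hi, hi'⟩ := (hlt'.and hC).exists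
  exact hi.not_ge hi'

/-- The rank `d_τ(x* x)` of an arbitrary element `x` with respect to a quasitrace. Unlike `d_τ` on
positive elements it is invariant under adjoints, decreases under multiplication by any element
and, in a stabilization, is subadditive. -/
def rank (x : B) : ℝ≥0∞ := dTau τ (star x * x)

variable {τ}

@[simp]
lemma rank_zero : τ.rank 0 = 0 := by
  simp [rank, dTau, fEps, τ.map_zero]

@[simp]
lemma rank_neg (x : B) : τ.rank (-x) = τ.rank x := by
  simp [rank]

end QuasiTrace

variable [StarOrderedRing B]

lemma conj_mul_conj_eq_zero {S : Type*} [SemigroupWithZero S] {a b h : S} (hcomm : Commute a h)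
    (hab : a * b = 0) : h * a * h * (h * b * h) = 0 := calc
  h * a * h * (h * b * h) = h * (a * (h * h)) * b * h := by simp only [mul_assoc]
  _ = h * (h * h) * (a * b) * h := by
    rw [(hcomm.mul_right hcomm).eq]
    simp only [mul_assoc]
  _ = 0 := by rw [hab, mul_zero, zero_mul]

lemma le_of_mul_eq_self_of_norm_le_one {F q : B} (hF : 0 ≤ F) (hF1 : ‖F‖ ≤ 1) (hq : 0 ≤ q)
    (h : q * F = F) : F ≤ q := by
  have hcomm : Commute q F := by
    have hstar := congrArg star h
    rw [star_mul, hF.isSelfAdjoint.star_eq, hq.isSelfAdjoint.star_eq] at hstar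
    exact h.trans hstar.symm
  have hsF : Commute (CFC.sqrt q) F := hcomm.cfcₙ_nnreal NNReal.sqrt
  have hs : star (CFC.sqrt q) = CFC.sqrt q := (CFC.sqrt_nonneg q).isSelfAdjoint.star_eq
  have hss : CFC.sqrt q * CFC.sqrt q = q := CFC.sqrt_mul_sqrt_self q hq
  calc F = star (CFC.sqrt q) * F * CFC.sqrt q := by
        rw [hs, mul_assoc, ← hsF.eq, ← mul_assoc, hss, h]
    _ ≤ ‖F‖ • (star (CFC.sqrt q) * CFC.sqrt q) :=
        CStarAlgebra.star_left_conjugate_le_norm_smul hF.isSelfAdjoint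
    _ = ‖F‖ • q := by rw [hs, hss]
    _ ≤ (1 : ℝ) • q := smul_le_smul_of_nonneg_right hF1 hq
    _ = q := one_smul ℝ q

namespace QuasiTrace

variable (τ : QuasiTrace B)

lemma toFun_mono_of_mul_eq_self {F q : B} (hF : 0 ≤ F) (hF1 : ‖F‖ ≤ 1) (hq : 0 ≤ q)
    (h : q * F = F) : τ.toFun F ≤ τ.toFun q := by
  have hle : F ≤ q := le_of_mul_eq_self_of_norm_le_one hF hF1 hq h
  have hstar := congrArg star h
  rw [star_mul, hF.isSelfAdjoint.star_eq, hq.isSelfAdjoint.star_eq] at hstar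
  have hadd := τ.map_add_of_commute F (q - F) hF (sub_nonneg.2 hle)
    (by rw [mul_sub, sub_mul, h, hstar])
  rw [add_sub_cancel] at hadd
  exact hadd ▸ le_self_add

lemma toFun_sum_of_commute {ι : Type*} (s : Finset ι) {f : ι → B} (hf : ∀ i, 0 ≤ f i)
    (hcomm : ∀ i j, Commute (f i) (f j)) :
    τ.toFun (∑ i ∈ s, f i) = ∑ i ∈ s, τ.toFun (f i) := by
  classical
  induction s using Finset.induction_on with
  | empty => simpa using τ.map_zero
  | insert i s his ih =>
    rw [Finset.sum_insert his, Finset.sum_insert his, ← ih]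
    exact τ.map_add_of_commute _ _ (hf i) (Finset.sum_nonneg fun j _ => hf j)
      (Commute.sum_right s f (f i) fun j _ => hcomm i j)

lemma toFun_fEps_le_dTau {ε : ℝ} (hε : 0 < ε) (a : B) : τ.toFun (fEps ε a) ≤ dTau τ a := by
  obtain ⟨n, hn⟩ := exists_nat_one_div_lt (half_pos hε)
  exact (τ.toFun_mono_of_mul_eq_self (fEps_nonneg ε a) (norm_fEps_le_one ε a) (fEps_nonneg _ a)
    (fEps_mul_fEps (by positivity) hn.le a)).trans
    (le_iSup (fun n : ℕ => τ.toFun (fEps (1 / ((n : ℝ) + 1)) a)) n)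

lemma dTau_le_of_mul_eq_self {a q : B} (ha : 0 ≤ a) (hq : 0 ≤ q) (h : q * a = a) :
    dTau τ a ≤ τ.toFun q := by
  refine iSup_le fun n => τ.toFun_mono_of_mul_eq_self (fEps_nonneg _ a) (norm_fEps_le_one _ a) hq ?_
  have hcomm : Commute a (fEpsRoot (1 / (n + 1)) a) := (Commute.refl a).cfcₙ_real _ |>.symm
  rw [← fEpsRoot_mul_mul_fEpsRoot (by positivity) ha, ← hcomm.eq, mul_assoc, ← mul_assoc q, h]

variable {τ}

lemma rank_le_toFun_of_mul_eq_self {g q : B} (hq : 0 ≤ q) (h : g * q = g) :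
    τ.rank g ≤ τ.toFun q := by
  refine τ.dTau_le_of_mul_eq_self (star_mul_self_nonneg g) hq ?_
  rw [← mul_assoc, ← hq.isSelfAdjoint.star_eq, ← star_mul, h]

lemma rank_le_of_tendsto {ι : Type*} {l : Filter ι} [l.NeBot] {u : ι → B} {x : B}
    (h : Tendsto u l (𝓝 x)) {C : ℝ≥0∞} (hC : ∀ᶠ i in l, τ.rank (u i) ≤ C) : τ.rank x ≤ C :=
  iSup_le fun _ => τ.toFun_le_of_tendsto (fun i => fEps_nonneg _ (star (u i) * u i))
    (fEps_nonneg _ _) (((continuous_fEps_star_mul_self _).tendsto x).comp h)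
    (hC.mono fun i hi => (τ.toFun_fEps_le_dTau (by positivity) _).trans hi)

/- The convergence hypothesis says that `z` lies in the closed left ideal generated by `x`. -/
lemma toFun_star_mul_self_le_rank_of_tendsto {x z : B} (hz : ‖z‖ ≤ 1)
    (h : Tendsto (fun n : ℕ => z * fEps (1 / (n + 1)) (star x * x)) atTop (𝓝 z)) :
    τ.toFun (star z * z) ≤ τ.rank x := by
  refine τ.toFun_le_of_tendsto (fun n => star_mul_self_nonneg _) (star_mul_self_nonneg z)
    (h.star.mul h) (Eventually.of_forall fun n => ?_)
  have hn : (0 : ℝ) < 1 / (n + 1) := by positivity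
  refine (τ.toFun_mono_of_mul_eq_self (star_mul_self_nonneg _) ?_ (fEps_nonneg _ _) ?_).trans
    (τ.toFun_fEps_le_dTau (half_pos hn) (star x * x))
  · rw [CStarRing.norm_star_mul_self]
    have hle : ‖z * fEps (1 / (n + 1)) (star x * x)‖ ≤ 1 :=
      (norm_mul_le _ _).trans (mul_le_one₀ hz (norm_nonneg _) (norm_fEps_le_one _ _))
    exact mul_le_one₀ hle (norm_nonneg _) hle
  · rw [star_mul, star_fEps, mul_assoc, ← mul_assoc (fEps (1 / (n + 1) / 2) _),
      fEps_mul_fEps (half_pos hn) le_rfl]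

lemma toFun_star_mul_self_le_rank {z : B} (hz : ‖z‖ ≤ 1) : τ.toFun (star z * z) ≤ τ.rank z :=
  toFun_star_mul_self_le_rank_of_tendsto hz (tendsto_mul_fEps z)

lemma rank_star_le_of_tendsto {x y : B}
    (h : Tendsto (fun n : ℕ => y * fEps (1 / (n + 1)) (star x * x)) atTop (𝓝 y)) :
    τ.rank (star y) ≤ τ.rank x := by
  refine iSup_le fun n => ?_
  set ε : ℝ := 1 / (n + 1)
  set z := fEpsRoot ε (y * star y) * y with hz
  have hzz : z * star z = fEps ε (y * star y) := by
    rw [← fEpsRoot_mul_mul_fEpsRoot (by positivity) (mul_star_self_nonneg y), hz, star_mul,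
      star_fEpsRoot]
    simp only [mul_assoc]
  have hz1 : ‖z‖ ≤ 1 := by
    rw [← sq_le_one_iff₀ (norm_nonneg z), pow_two, ← CStarRing.norm_self_mul_star, hzz]
    exact norm_fEps_le_one _ _
  rw [star_star, ← hzz, ← τ.map_star_mul_self z]
  refine toFun_star_mul_self_le_rank_of_tendsto hz1 ?_
  simpa only [hz, mul_assoc] using h.const_mul (fEpsRoot ε (y * star y))

@[simp]
lemma rank_star (x : B) : τ.rank (star x) = τ.rank x :=
  le_antisymm (rank_star_le_of_tendsto (tendsto_mul_fEps x))
    (by simpa using rank_star_le_of_tendsto (τ := τ) (tendsto_mul_fEps (star x)))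

lemma rank_mul_le_right (a x : B) : τ.rank (a * x) ≤ τ.rank x := by
  rw [← rank_star]
  exact rank_star_le_of_tendsto (by simpa only [mul_assoc] using (tendsto_mul_fEps x).const_mul a)

lemma rank_mul_le_left (x b : B) : τ.rank (x * b) ≤ τ.rank x := by
  rw [← rank_star, star_mul, ← rank_star x]
  exact rank_mul_le_right _ _

lemma rank_add_le_of_orthogonal {x y : B} (hxy : star x * y = 0) (hxy' : x * star y = 0) :
    τ.rank (x + y) ≤ τ.rank x + τ.rank y := by
  have hyx : star y * x = 0 := by simpa using congrArg star hxy
  have hsum : star (x + y) * (x + y) = star x * x + star y * y := by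
    rw [star_add, add_mul, mul_add, mul_add, hxy, hyx, add_zero, zero_add]
  have hmul : star x * x * (star y * y) = 0 := by
    rw [mul_assoc, ← mul_assoc x, hxy', zero_mul, mul_zero]
  refine iSup_le fun n => ?_
  set ε : ℝ := 1 / (n + 1)
  set h := fEpsRoot ε (star (x + y) * (x + y)) with hh
  have hcomm : Commute (star x * x) h := by
    refine Commute.symm (Commute.cfcₙ_real ?_ _)
    have hmul' : star y * y * (star x * x) = 0 := by simpa using congrArg star hmul
    rw [hsum, commute_iff_eq, add_mul, mul_add, hmul, hmul']
  have hconj (z : B) : star (z * h) * (z * h) = h * (star z * z) * h := by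
    rw [star_mul, star_fEpsRoot, ← hh]
    simp only [mul_assoc]
  have hsplit : fEps ε (star (x + y) * (x + y)) =
      star (x * h) * (x * h) + star (y * h) * (y * h) := by
    rw [hconj, hconj, ← add_mul, ← mul_add, ← hsum,
      fEpsRoot_mul_mul_fEpsRoot (by positivity) (star_mul_self_nonneg _)]
  have horth : star (x * h) * (x * h) * (star (y * h) * (y * h)) = 0 := by
    rw [hconj, hconj, conj_mul_conj_eq_zero hcomm hmul]
  have horth' : star (y * h) * (y * h) * (star (x * h) * (x * h)) = 0 := by
    simpa using congrArg star horth
  have hnorm {z : B} (hz : star z * z ≤ fEps ε (star (x + y) * (x + y))) : ‖z‖ ≤ 1 := by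
    rw [← sq_le_one_iff₀ (norm_nonneg z), pow_two, ← CStarRing.norm_star_mul_self]
    exact (CStarAlgebra.norm_le_norm_of_nonneg_of_le (star_mul_self_nonneg z) hz).trans
      (norm_fEps_le_one _ _)
  rw [hsplit, τ.map_add_of_commute _ _ (star_mul_self_nonneg _) (star_mul_self_nonneg _)
    (horth.trans horth'.symm)]
  gcongr
  · exact (toFun_star_mul_self_le_rank (hnorm (hsplit ▸ le_add_of_nonneg_right
      (star_mul_self_nonneg _)))).trans (rank_mul_le_left x h)
  · exact (toFun_star_mul_self_le_rank (hnorm (hsplit ▸ le_add_of_nonneg_left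
      (star_mul_self_nonneg _)))).trans (rank_mul_le_left y h)

lemma isZero_of_rank_eq_zero (h : ∀ x : B, τ.rank x = 0) : τ.IsZero := by
  intro F
  by_cases hF : 0 ≤ F
  swap
  · exact τ.zero_of_not_nonneg F hF
  set r : ℝ := ‖CFC.sqrt F‖ + 1
  have hr0 : 0 < r := by positivity
  set z : B := r⁻¹ • CFC.sqrt F with hz
  have hz1 : ‖z‖ ≤ 1 := by
    rw [hz, norm_smul, norm_inv, Real.norm_of_nonneg hr0.le, inv_mul_le_one₀ hr0]
    exact (lt_add_one _).le
  have hF' : F = (r * r) • (star z * z) := by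
    rw [hz, star_smul, (CFC.sqrt_nonneg F).isSelfAdjoint.star_eq, smul_mul_smul_comm,
      CFC.sqrt_mul_sqrt_self F hF, smul_smul, star_trivial, mul_mul_mul_comm,
      mul_inv_cancel₀ hr0.ne', one_mul, one_smul]
  rw [hF', τ.map_smul _ _ (by positivity) (star_mul_self_nonneg z),
    nonpos_iff_eq_zero.1 ((toFun_star_mul_self_le_rank hz1).trans_eq (h z)), mul_zero]

end QuasiTrace

end Rank

section Subadditivity

lemma tendsto_mul_of_dense {R ι : Type*} [NonUnitalSeminormedRing R] {l : Filter ι} {u : ι → R}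
    (hu : ∀ᶠ i in l, ‖u i‖ ≤ 1) {s : Set R} (hs : Dense s)
    (h : ∀ y ∈ s, Tendsto (fun i => u i * y) l (𝓝 y)) (x : R) :
    Tendsto (fun i => u i * x) l (𝓝 x) := by
  rw [Metric.tendsto_nhds]
  intro ε hε
  obtain ⟨y, hxy, hys⟩ := Metric.dense_iff.1 hs x (ε / 3) (by positivity)
  rw [Metric.mem_ball, dist_eq_norm] at hxy
  filter_upwards [hu, Metric.tendsto_nhds.1 (h y hys) (ε / 3) (by positivity)] with i hi hiy
  rw [dist_eq_norm] at hiy ⊢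
  calc ‖u i * x - x‖ = ‖(u i * y - y) + (y - x) - u i * (y - x)‖ := by
        rw [mul_sub]
        abel_nf
    _ ≤ ‖u i * y - y‖ + ‖y - x‖ + ‖u i * (y - x)‖ :=
        (norm_sub_le _ _).trans (add_le_add_left (norm_add_le _ _) _)
    _ ≤ ‖u i * y - y‖ + ‖y - x‖ + 1 * ‖y - x‖ := by
        gcongr
        exact (norm_mul_le _ _).trans (by gcongr)
    _ < ε := by linarith

lemma QuasiTrace.rank_mul_add_mul_le [PartialOrder B] [StarOrderedRing B] {τ : QuasiTrace B}
    {q q' v v' w w' : B} (hv : star v * v = q) (hw : star w * w = q) (hvw : star v * w = 0)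
    (hv' : star v' * v' = q') (hw' : star w' * w' = q') (hvw' : star v' * w' = 0) (x y : B) :
    τ.rank (q * (x + y) * q') ≤ τ.rank x + τ.rank y := by
  have hwv : star w * v = 0 := by simpa using congrArg star hvw
  have hwv' : star w' * v' = 0 := by simpa using congrArg star hvw'
  have hleft : star (v + w) * v = q ∧ star (v + w) * w = q := by
    constructor <;> simp [add_mul, hv, hw, hvw, hwv]
  have hright : star v' * (v' + w') = q' ∧ star w' * (v' + w') = q' := by
    constructor <;> simp [mul_add, hv', hw', hvw', hwv']
  have hsplit : q * (x + y) * q' =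
      star (v + w) * (v * x * star v' + w * y * star w') * (v' + w') := calc
    q * (x + y) * q' = q * x * q' + q * y * q' := by rw [mul_add, add_mul]
    _ = star (v + w) * v * x * (star v' * (v' + w')) +
        star (v + w) * w * y * (star w' * (v' + w')) := by
      rw [hleft.1, hleft.2, hright.1, hright.2]
    _ = star (v + w) * (v * x * star v' + w * y * star w') * (v' + w') := by
      rw [mul_add _ (v * x * star v'), add_mul _ _ (v' + w')]
      simp only [mul_assoc]
  have horth : star (v * x * star v') * (w * y * star w') = 0 := calc
    star (v * x * star v') * (w * y * star w')
      = v' * star x * (star v * w) * y * star w' := by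
        simp only [star_mul, star_star, mul_assoc]
    _ = 0 := by simp [hvw]
  have horth' : v * x * star v' * star (w * y * star w') = 0 := calc
    v * x * star v' * star (w * y * star w')
      = v * x * (star v' * w') * star y * star w := by
        simp only [star_mul, star_star, mul_assoc]
    _ = 0 := by simp [hvw']
  calc τ.rank (q * (x + y) * q') ≤ τ.rank (v * x * star v' + w * y * star w') := by
        rw [hsplit]
        exact (rank_mul_le_left _ _).trans (rank_mul_le_right _ _)
    _ ≤ τ.rank (v * x * star v') + τ.rank (w * y * star w') :=
        rank_add_le_of_orthogonal horth horth'
    _ ≤ τ.rank x + τ.rank y := by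
        gcongr
        · exact (rank_mul_le_left _ _).trans (rank_mul_le_right _ _)
        · exact (rank_mul_le_left _ _).trans (rank_mul_le_right _ _)

namespace Stabilization

variable {D : Type*} [NonUnitalCStarAlgebra D] (SB : Stabilization D B)

lemma continuous_emb (i j : ℕ) : Continuous (SB.emb i j) :=
  AddMonoidHomClass.continuous_of_bound (SB.emb i j) 1 fun b => by rw [SB.norm_emb, one_mul]

/-- The diagonal embedding `b ↦ ∑_{i < n} b ⊗ e_{ii}` of `D` into its stabilization. -/
def diag (n : ℕ) : D →⋆ₙₐ[ℂ] B where
  toFun b := ∑ i ∈ Finset.range n, SB.emb i i b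
  map_smul' c b := by simp [Finset.smul_sum]
  map_zero' := by simp
  map_add' b c := by simp [Finset.sum_add_distrib]
  map_mul' b c := by
    rw [Finset.sum_mul_sum]
    refine Finset.sum_congr rfl fun i hi => ?_
    simp only [SB.emb_mul]
    rw [Finset.sum_ite_eq, if_pos hi]
  map_star' b := by simp [SB.emb_star]

lemma diag_apply (n : ℕ) (b : D) : SB.diag n b = ∑ i ∈ Finset.range n, SB.emb i i b := rfl

lemma norm_diag_le (n : ℕ) (b : D) : ‖SB.diag n b‖ ≤ ‖b‖ :=
  NonUnitalStarAlgHom.norm_apply_le _ _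

lemma diag_mul_emb {n i : ℕ} (hi : i < n) (j : ℕ) (b c : D) :
    SB.diag n b * SB.emb i j c = SB.emb i j (b * c) := by
  simp only [diag_apply, Finset.sum_mul, SB.emb_mul]
  rw [Finset.sum_ite_eq', if_pos (Finset.mem_range.2 hi)]

/-- The shifted diagonal `∑_{i < n} b ⊗ e_{s + i, i}`. For `b* b = c`, different shifts provide
partial-isometry-like elements `v` with `v* v = ∑_{i < n} c ⊗ e_{ii}` and orthogonal ranges. -/
def shiftedDiag (s n : ℕ) (b : D) : B := ∑ i ∈ Finset.range n, SB.emb (s + i) i b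

lemma star_shiftedDiag_mul_self (s n : ℕ) (b : D) :
    star (SB.shiftedDiag s n b) * SB.shiftedDiag s n b = SB.diag n (star b * b) := by
  rw [shiftedDiag, star_sum, Finset.sum_mul_sum]
  refine Finset.sum_congr rfl fun i hi => ?_
  simp only [SB.emb_star, SB.emb_mul, add_right_inj]
  rw [Finset.sum_ite_eq, if_pos hi]

lemma star_shiftedDiag_mul_of_le {s t n : ℕ} (h : s + n ≤ t) (b c : D) :
    star (SB.shiftedDiag s n b) * SB.shiftedDiag t n c = 0 := by
  rw [shiftedDiag, shiftedDiag, star_sum, Finset.sum_mul_sum]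
  refine Finset.sum_eq_zero fun i hi => Finset.sum_eq_zero fun j _ => ?_
  have hi' := Finset.mem_range.1 hi
  rw [SB.emb_star, SB.emb_mul, if_neg (by lia)]

lemma coe_eq_univ_of_emb_mem {J : TwoSidedIdeal B} (hJ : IsClosed (J : Set B))
    (hemb : ∀ i j b, SB.emb i j b ∈ J) : (J : Set B) = Set.univ := by
  refine Set.eq_univ_of_univ_subset ?_
  rw [← SB.dense_span.closure_eq]
  refine hJ.closure_subset_iff.2 fun y hy => ?_
  induction hy using Submodule.closure_induction with
  | zero => exact J.zero_mem
  | add y z _ _ hy hz => exact J.add_mem hy hz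
  | smul_mem c y hy =>
    obtain ⟨i, j, b, rfl⟩ := hy
    rw [← map_smul]
    exact hemb i j _

lemma coe_eq_univ_of_isClosed (hD : IsSimpleCStar D) {J : TwoSidedIdeal B}
    (hJ : IsClosed (J : Set B)) {a : D} (ha : a ≠ 0) (haJ : SB.emb 0 0 a ∈ J) :
    (J : Set B) = Set.univ := by
  let I : TwoSidedIdeal D := TwoSidedIdeal.mk' {b | ∀ i j, SB.emb i j b ∈ J}
    (fun i j => by simp [J.zero_mem])
    (fun hb hc i j => by simpa using J.add_mem (hb i j) (hc i j))
    (fun hb i j => by simpa only [map_neg] using J.neg_mem (hb i j))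
    (fun {b c} hc i j => by simpa [SB.emb_mul] using J.mul_mem_left (SB.emb i i b) _ (hc i j))
    (fun {b c} hb i j => by simpa [SB.emb_mul] using J.mul_mem_right _ (SB.emb j j c) (hb i j))
  have hI : (I : Set D) = {b | ∀ i j, SB.emb i j b ∈ J} := TwoSidedIdeal.coe_mk' ..
  have hIclosed : IsClosed (I : Set D) := by
    rw [hI, Set.ofPred_forall]
    refine isClosed_iInter fun i => ?_
    rw [Set.ofPred_forall]
    exact isClosed_iInter fun j => hJ.preimage (SB.continuous_emb i j)
  have haI : star a * a * (star a * a) ∈ (I : Set D) := by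
    rw [hI]
    intro i j
    simpa [SB.emb_mul, mul_assoc] using
      J.mul_mem_right _ (SB.emb 0 j (star a * a)) (J.mul_mem_left (SB.emb i 0 (star a)) _ haJ)
  have ha0 : star a * a * (star a * a) ≠ 0 := by
    have hsa : star (star a * a) = star a * a := by simp
    have hne := CStarRing.star_mul_self_ne_zero_iff (star a * a)
    rw [hsa] at hne
    exact hne.2 ((CStarRing.star_mul_self_ne_zero_iff a).2 ha)
  have hIuniv : (I : Set D) = Set.univ := (hD.2 I hIclosed).resolve_left fun h => ha0 (h ▸ haI :)
  refine SB.coe_eq_univ_of_emb_mem hJ fun i j b => ?_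
  have hb : b ∈ (I : Set D) := hIuniv ▸ Set.mem_univ b
  rw [hI] at hb
  exact hb i j

section Order

variable [PartialOrder D] [StarOrderedRing D]

lemma tendsto_diag_mul (x : B) :
    Tendsto (fun p : ℕ × D => SB.diag p.1 p.2 * x) (atTop ×ˢ CStarAlgebra.approximateUnit D)
      (𝓝 x) := by
  have hU := CStarAlgebra.increasingApproximateUnit D
  refine tendsto_mul_of_dense ?_ SB.dense_span (fun y hy => ?_) x
  · filter_upwards [hU.eventually_norm.prod_inr atTop] with p hp
    exact (SB.norm_diag_le _ _).trans hp
  · induction hy using Submodule.span_induction with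
    | mem y hy =>
      obtain ⟨i, j, a, rfl⟩ := hy
      refine Tendsto.congr' ?_ (((SB.continuous_emb i j).tendsto a).comp
        ((hU.tendsto_mul_right a).comp tendsto_snd))
      filter_upwards [(eventually_gt_atTop i).prod_inl _] with p hp
      exact (SB.diag_mul_emb hp j p.2 a).symm
    | zero => simp
    | add y z _ _ hy hz => simpa only [mul_add] using hy.add hz
    | smul c y _ hy => simpa only [mul_smul_comm] using hy.const_smul c

variable {SB}

lemma exists_star_mul_self_eq_diag (n : ℕ) {u : D} (hu : 0 ≤ u) :
    ∃ v w : B, star v * v = SB.diag n u ∧ star w * w = SB.diag n u ∧ star v * w = 0 := by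
  have hsq : star (CFC.sqrt u) * CFC.sqrt u = u := by
    rw [(CFC.sqrt_nonneg u).isSelfAdjoint.star_eq, CFC.sqrt_mul_sqrt_self u hu]
  refine ⟨SB.shiftedDiag 0 n (CFC.sqrt u), SB.shiftedDiag n n (CFC.sqrt u), ?_, ?_,
    SB.star_shiftedDiag_mul_of_le (zero_add n).le _ _⟩ <;>
    rw [star_shiftedDiag_mul_self, hsq]

variable (SB)

lemma diag_fEps_mem_pedersen (n : ℕ) {ε : ℝ} (hε : 0 < ε) {a : D} (ha : 0 ≤ a) :
    SB.diag n (fEps ε a) ∈ pedersen B :=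
  mem_pedersen_of_mul_eq_self (a := SB.diag n (fEpsRoot (ε / 2) a * a))
    (h := SB.diag n (fEpsRoot (ε / 2) a)) <| by
    rw [← map_mul, ← map_mul, fEpsRoot_mul_mul_fEpsRoot (half_pos hε) ha,
      fEps_mul_fEps_of_le (half_pos hε) le_rfl]

end Order

variable [PartialOrder B] [StarOrderedRing B]

/- After cutting down on both sides, the two summands fit into disjoint blocks of `A ⊗ K`. -/
lemma rank_add_le (SB : Stabilization D B) (τ : QuasiTrace B) (x y : B) :
    τ.rank (x + y) ≤ τ.rank x + τ.rank y := by
  let _ := CStarAlgebra.spectralOrder D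
  have := CStarAlgebra.spectralOrderedRing D
  have hU := CStarAlgebra.increasingApproximateUnit D
  have := hU.neBot
  have hpos := hU.eventually_nonneg.prod_inr (atTop : Filter ℕ)
  refine QuasiTrace.rank_le_of_tendsto (SB.tendsto_diag_mul (x + y)) ?_
  filter_upwards [hpos] with p hp
  rw [← QuasiTrace.rank_star]
  refine QuasiTrace.rank_le_of_tendsto
    (SB.tendsto_diag_mul (star (SB.diag p.1 p.2 * (x + y)))) ?_
  filter_upwards [hpos] with p' hp'
  obtain ⟨v, w, hv, hw, hvw⟩ := SB.exists_star_mul_self_eq_diag p.1 hp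
  obtain ⟨v', w', hv', hw', hvw'⟩ := SB.exists_star_mul_self_eq_diag p'.1 hp'
  rw [← QuasiTrace.rank_star, star_mul, star_star, ← map_star, hp'.isSelfAdjoint.star_eq]
  exact QuasiTrace.rank_mul_add_mul_le hv hw hvw hv' hw' hvw' x y

lemma isZero_of_rank_emb_eq_zero (hD : IsSimpleCStar D) {τ : QuasiTrace B} {a : D} (ha : a ≠ 0)
    (h : τ.rank (SB.emb 0 0 a) = 0) : τ.IsZero := by
  let J : TwoSidedIdeal B := TwoSidedIdeal.mk' {x | τ.rank x = 0} QuasiTrace.rank_zero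
    (fun {x y} hx hy => nonpos_iff_eq_zero.1 <| (SB.rank_add_le τ x y).trans <| by
      rw [hx, hy, add_zero])
    (fun {x} hx => (QuasiTrace.rank_neg x).trans hx)
    (fun {x y} hy => nonpos_iff_eq_zero.1 <| (QuasiTrace.rank_mul_le_right x y).trans_eq hy)
    (fun {x y} hx => nonpos_iff_eq_zero.1 <| (QuasiTrace.rank_mul_le_left x y).trans_eq hx)
  have hJ : (J : Set B) = {x | τ.rank x = 0} := TwoSidedIdeal.coe_mk' ..
  have hJclosed : IsClosed (J : Set B) := by
    rw [hJ, ← isSeqClosed_iff_isClosed]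
    exact fun u x hu hux => nonpos_iff_eq_zero.1 <|
      QuasiTrace.rank_le_of_tendsto hux (Eventually.of_forall fun n => (hu n).le)
  have hJuniv := SB.coe_eq_univ_of_isClosed hD hJclosed ha ((TwoSidedIdeal.mem_mk' ..).2 h)
  refine QuasiTrace.isZero_of_rank_eq_zero fun x => ?_
  exact (hJ ▸ hJuniv ▸ Set.mem_univ x : x ∈ {x | τ.rank x = 0})

lemma toFun_diag [PartialOrder D] [StarOrderedRing D] (τ : QuasiTrace B) (n : ℕ) {a : D}
    (ha : 0 ≤ a) : τ.toFun (SB.diag n a) = n * τ.toFun (SB.emb 0 0 a) := by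
  set s := CFC.sqrt a
  have hs : star s = s := (CFC.sqrt_nonneg a).isSelfAdjoint.star_eq
  have hss : s * s = a := CFC.sqrt_mul_sqrt_self a ha
  have hemb (i : ℕ) : star (SB.emb i 0 s) * SB.emb i 0 s = SB.emb 0 0 a ∧
      SB.emb i 0 s * star (SB.emb i 0 s) = SB.emb i i a := by
    simp [SB.emb_star, SB.emb_mul, hs, hss]
  have htrace (i : ℕ) : τ.toFun (SB.emb i i a) = τ.toFun (SB.emb 0 0 a) := by
    rw [← (hemb i).1, τ.map_star_mul_self, (hemb i).2]
  rw [diag_apply, τ.toFun_sum_of_commute _ (fun i => ?_) (fun i j => ?_)]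
  · simp [htrace]
  · rw [← (hemb i).2]
    exact mul_star_self_nonneg _
  · rcases eq_or_ne i j with rfl | hij
    · rfl
    · rw [commute_iff_eq, SB.emb_mul, SB.emb_mul, if_neg hij, if_neg hij.symm]

end Stabilization

end Subadditivity

section LargeRank

lemma exists_nat_forall_mem_lt_mul {X : Type*} [TopologicalSpace X] {S : Set X}
    (hS : IsCompact S) {u : X → ℝ≥0∞} (hu : ContinuousOn u S) (hpos : ∀ s ∈ S, 0 < u s)
    {M : ℝ≥0∞} (hM : M < ∞) : ∃ N : ℕ, ∀ s ∈ S, M < N * u s := by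
  rcases S.eq_empty_or_nonempty with rfl | hne
  · exact ⟨0, by simp⟩
  obtain ⟨s, hs, hmin⟩ := hS.exists_isMinOn hne hu
  obtain ⟨N, hN⟩ : ∃ N : ℕ, M < N * u s := by
    rcases eq_or_ne (u s) ∞ with h | h
    · exact ⟨1, by simpa [h] using hM⟩
    · have hs0 := (hpos s hs).ne'
      obtain ⟨N, hN⟩ := ENNReal.exists_nat_gt (ENNReal.div_lt_top hM.ne hs0).ne
      exact ⟨N, (ENNReal.div_lt_iff (Or.inl hs0) (Or.inl h)).1 hN⟩
  exact ⟨N, fun t ht => hN.trans_le (by gcongr; exact hmin ht)⟩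

variable [PartialOrder B]

lemma continuous_toFun_of_mem_pedersen {c : B} (hc : c ∈ pedersen B) :
    Continuous fun τ : QuasiTrace B => τ.toFun c :=
  have hrestrict : Continuous fun τ : QuasiTrace B => fun a : pedersen B => τ.toFun a :=
    continuous_induced_dom
  (continuous_apply (⟨c, hc⟩ : pedersen B)).comp hrestrict

variable [StarOrderedRing B]

lemma exists_fEps_ne_zero {b : B} (hb : b ≠ 0) : ∃ ε > 0, fEps ε (star b * b) ≠ 0 := by
  by_contra! h
  have hzero (n : ℕ) : b * fEps (1 / ((n : ℝ) + 1)) (star b * b) = 0 := by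
    rw [h _ (by positivity), mul_zero]
  refine hb (tendsto_nhds_unique (tendsto_mul_fEps b) ?_)
  simp only [hzero, tendsto_const_nhds_iff]

namespace Stabilization

variable {D : Type*} [NonUnitalCStarAlgebra D]

lemma toFun_emb_pos (SB : Stabilization D B) (hD : IsSimpleCStar D) {τ : QuasiTrace B}
    (hτ : ¬ τ.IsZero) {g q : D} (hg : g ≠ 0) (h : g * (star q * q) = g) :
    0 < τ.toFun (SB.emb 0 0 (star q * q)) := by
  refine pos_iff_ne_zero.2 fun hzero => hτ (SB.isZero_of_rank_emb_eq_zero hD hg ?_)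
  have hle : τ.rank (SB.emb 0 0 g) ≤ τ.toFun (SB.emb 0 0 (star q * q)) := by
    refine QuasiTrace.rank_le_toFun_of_mul_eq_self ?_ (by simp [SB.emb_mul, h])
    have hsq : SB.emb 0 0 (star q * q) = star (SB.emb 0 0 q) * SB.emb 0 0 q := by
      simp [SB.emb_star, SB.emb_mul]
    exact hsq ▸ star_mul_self_nonneg _
  exact nonpos_iff_eq_zero.1 (hle.trans_eq hzero)

lemma exists_mem_pedersen_mul_eq_self_forall_lt_rank (SB : Stabilization D B)
    (hD : IsSimpleCStar D) {S : Set (QuasiTrace B)} (hS : IsCompact S)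
    (hS0 : ∀ τ ∈ S, ¬ τ.IsZero) {M : ℝ≥0∞} (hM : M < ∞) :
    ∃ f ∈ pedersen B, ∃ r, f * r = r ∧ ∀ τ ∈ S, M < τ.rank r := by
  let _ := CStarAlgebra.spectralOrder D
  have := CStarAlgebra.spectralOrderedRing D
  obtain ⟨b, hb⟩ := hD.1
  obtain ⟨ε, hε, hne⟩ := exists_fEps_ne_zero hb
  set a := star b * b
  have ha : 0 ≤ a := star_mul_self_nonneg b
  set q := fEps (ε / 2) a with hq
  have hmul : fEps ε a * (star q * q) = fEps ε a := by
    rw [hq, star_fEps, ← mul_assoc, fEps_mul_fEps_of_le (half_pos hε) le_rfl,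
      fEps_mul_fEps_of_le (half_pos hε) le_rfl]
  have hpedersen : SB.emb 0 0 (star q * q) ∈ pedersen B := by
    have hdiag : SB.emb 0 0 (star q * q) = SB.diag 1 q * SB.diag 1 q := by
      rw [← map_mul, diag_apply, Finset.sum_range_one, hq, star_fEps]
    exact hdiag ▸ pedersen_mul_right (SB.diag_fEps_mem_pedersen 1 (half_pos hε) ha) _
  obtain ⟨N, hN⟩ := exists_nat_forall_mem_lt_mul hS
    (continuous_toFun_of_mem_pedersen hpedersen).continuousOn
    (fun τ hτ => SB.toFun_emb_pos hD (hS0 τ hτ) hne hmul) hM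
  refine ⟨SB.diag N (fEps (ε / 2 / 2) a),
    SB.diag_fEps_mem_pedersen N (half_pos (half_pos hε)) ha, SB.diag N q, ?_, fun τ hτ => ?_⟩
  · rw [← map_mul, fEps_mul_fEps (half_pos (half_pos hε)) le_rfl]
  · calc M < N * τ.toFun (SB.emb 0 0 (star q * q)) := hN τ hτ
      _ = τ.toFun (star (SB.diag N q) * SB.diag N q) := by
        rw [← map_star, ← map_mul, SB.toFun_diag τ N (star_mul_self_nonneg q)]
      _ ≤ τ.rank (SB.diag N q) := QuasiTrace.toFun_star_mul_self_le_rank <|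
        (SB.norm_diag_le N q).trans (norm_fEps_le_one _ _)

end Stabilization

end LargeRank

section Bump

/-- The bump `f_{16⁻ʲ}(a) - f_{16⁻ⁱ}(a)`, which for `i < j` is concentrated on the part of the
spectrum of `a` between `16⁻ʲ / 2` and `16⁻ⁱ`. -/
def bump (i j : ℕ) (a : B) : B := fEps ((1 / 16) ^ j) a - fEps ((1 / 16) ^ i) a

variable {i j i' j' : ℕ} (a : B)

@[simp]
lemma star_bump : star (bump i j a) = bump i j a := by
  simp [bump]

lemma one_div_sixteen_pow_le_half {i j : ℕ} (hij : i < j) :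
    (1 / 16 : ℝ) ^ j ≤ (1 / 16) ^ i / 2 := calc
  (1 / 16 : ℝ) ^ j ≤ (1 / 16) ^ (i + 1) :=
    pow_le_pow_of_le_one (by norm_num) (by norm_num) hij
  _ ≤ (1 / 16) ^ i / 2 := by
    rw [pow_succ]
    linarith [show (0 : ℝ) < (1 / 16) ^ i by positivity]

lemma fEps_pow_mul_fEps_pow (hij : i < j) :
    fEps ((1 / 16) ^ j) a * fEps ((1 / 16) ^ i) a = fEps ((1 / 16) ^ i) a :=
  fEps_mul_fEps (by positivity) (one_div_sixteen_pow_le_half hij) a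

lemma fEps_pow_mul_fEps_pow_of_lt (hij : i < j) :
    fEps ((1 / 16) ^ i) a * fEps ((1 / 16) ^ j) a = fEps ((1 / 16) ^ i) a :=
  fEps_mul_fEps_of_le (by positivity) (one_div_sixteen_pow_le_half hij) a

lemma fEps_pow_mul_bump (hi : i < j') (hj : j < j') :
    fEps ((1 / 16) ^ j') a * bump i j a = bump i j a := by
  rw [bump, mul_sub, fEps_pow_mul_fEps_pow a hi, fEps_pow_mul_fEps_pow a hj]

lemma bump_mul_bump_inner (hi : i' < i) (hij : i < j) (hj : j < j') :
    bump i' j' a * bump i j a = bump i j a := by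
  rw [bump, sub_mul, fEps_pow_mul_bump a (hij.trans hj) hj, bump, mul_sub,
    fEps_pow_mul_fEps_pow_of_lt a hi, fEps_pow_mul_fEps_pow_of_lt a (hi.trans hij), sub_self,
    sub_zero]

lemma bump_mul_bump_outer (hi : i' < i) (hij : i < j) (hj : j < j') :
    bump i j a * bump i' j' a = bump i j a := by
  simpa using congrArg star (bump_mul_bump_inner a hi hij hj)

variable [PartialOrder B] [StarOrderedRing B]

lemma bump_nonneg (hij : i < j) : 0 ≤ bump i j a :=
  sub_nonneg.2 <| le_of_mul_eq_self_of_norm_le_one (fEps_nonneg _ a) (norm_fEps_le_one _ a)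
    (fEps_nonneg _ a) (fEps_pow_mul_fEps_pow a hij)

lemma norm_bump_le_one (hij : i < j) : ‖bump i j a‖ ≤ 1 :=
  (CStarAlgebra.norm_le_norm_of_nonneg_of_le (bump_nonneg a hij)
    (sub_le_self _ (fEps_nonneg _ a))).trans (norm_fEps_le_one ((1 / 16) ^ j) a)

lemma norm_sub_mul_fEps_pow_le (x : B) (n : ℕ) :
    ‖x - x * fEps ((1 / 16) ^ n) (star x * x)‖ ≤ (1 / 4) ^ n := by
  refine le_of_sq_le_sq ?_ (by positivity)
  refine (norm_sub_mul_fEps_sq_le (by positivity) x).trans_eq ?_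
  rw [← pow_mul, mul_comm, pow_mul]
  norm_num

lemma norm_mul_bump_le (x : B) (hij : i ≤ j) :
    ‖x * bump i j (star x * x)‖ ≤ 2 * (1 / 4) ^ i := by
  have hbump : x * bump i j (star x * x) = (x - x * fEps ((1 / 16) ^ i) (star x * x)) -
      (x - x * fEps ((1 / 16) ^ j) (star x * x)) := by
    rw [bump, mul_sub]
    abel
  calc ‖x * bump i j (star x * x)‖ ≤ (1 / 4) ^ i + (1 / 4) ^ j :=
        hbump ▸ (norm_sub_le _ _).trans
          (add_le_add (norm_sub_mul_fEps_pow_le x i) (norm_sub_mul_fEps_pow_le x j))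
    _ ≤ (1 / 4) ^ i + (1 / 4) ^ i := by
      gcongr 1
      exact pow_le_pow_of_le_one (by norm_num) (by norm_num) hij
    _ = 2 * (1 / 4) ^ i := (two_mul _).symm

namespace QuasiTrace

variable (τ : QuasiTrace B)

lemma toFun_fEps_pow_add_toFun_bump (hij : i < j) :
    τ.toFun (fEps ((1 / 16) ^ i) a) + τ.toFun (bump i j a) = τ.toFun (fEps ((1 / 16) ^ j) a) := by
  rw [← τ.map_add_of_commute _ _ (fEps_nonneg _ a) (bump_nonneg a hij), bump, add_sub_cancel]
  rw [bump, mul_sub, sub_mul, (fEps_commute _ _ a).eq]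

lemma dTau_bump_le (hij : i < j) : dTau τ (bump i j a) ≤ dTau τ a :=
  (τ.dTau_le_of_mul_eq_self (bump_nonneg a hij) (fEps_nonneg _ a)
    (fEps_pow_mul_bump a (hij.trans j.lt_succ_self) j.lt_succ_self)).trans
    (τ.toFun_fEps_le_dTau (by positivity) a)

lemma sum_toFun_bump_le {m : ℕ → ℕ} (hm : StrictMono m) (n : ℕ) :
    ∑ k ∈ Finset.range n, τ.toFun (bump (m k) (m (k + 2)) a) ≤ 2 * dTau τ a := by
  have htelescope : ∑ k ∈ Finset.range n, τ.toFun (bump (m k) (m (k + 2)) a) ≤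
      τ.toFun (fEps ((1 / 16) ^ m n) a) + τ.toFun (fEps ((1 / 16) ^ m (n + 1)) a) := by
    induction n with
    | zero => simp
    | succ n ih =>
      rw [Finset.sum_range_succ,
        ← τ.toFun_fEps_pow_add_toFun_bump a (hm (by lia : n < n + 2)), ← add_assoc]
      exact add_le_add_left (ih.trans_eq (add_comm _ _)) _
  rw [two_mul]
  exact htelescope.trans (add_le_add (τ.toFun_fEps_le_dTau (by positivity) a)
    (τ.toFun_fEps_le_dTau (by positivity) a))

end QuasiTrace

end Bump

section Carving

/-- `IsCarving g h r r' y Y` says that a piece `y` has been carved out of `r`, leaving a remainder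
`r'` orthogonal to `y`: both lie in the right ideal generated by `r`, the loss `r - r'` factors
through `h`, and `Y` is a local right inverse of `star y`: the product `star y * Y` acts as a right
unit on `g`. The numerical bounds are those provided by the construction. -/
structure IsCarving (g h r r' y Y : B) : Prop where
  remainder_eq : ∃ t, r' = r + r * t
  piece_eq : ∃ t, y = r * t
  inverse_eq : ∃ t, Y = y + y * t
  star_piece_mul_remainder : star y * r' = 0
  mul_star_piece_mul_inverse : g * (star y * Y) = g
  norm_piece_le : ‖y‖ ≤ 2
  norm_inverse_le : ‖Y‖ ≤ 4
  exists_eq_add : ∃ b c, r = r' + b * h * c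

lemma CuntzLE.exists_norm_sub_lt {p r : B} (h : CuntzLE p (star r * r)) {ε : ℝ} (hε : 0 < ε) :
    ∃ s, ‖star (r * s) * (r * s) - p‖ < ε := by
  obtain ⟨s, hs⟩ := h
  obtain ⟨n, hn⟩ := (hs.eventually_lt_const hε).exists
  refine ⟨s n, ?_⟩
  rw [norm_sub_rev, star_mul, mul_assoc (star (s n)), ← mul_assoc (star r), ← mul_assoc]
  exact hn

lemma exists_mul_star_mul_eq_self {m p : B} (h : ‖star m * m - p‖ < 1) :
    ∃ d, ∀ g, g * p = g → g * (star m * (m + m * d)) = g := by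
  obtain ⟨d, hd⟩ := exists_quasiInverse h
  refine ⟨d, fun g hg => ?_⟩
  calc g * (star m * (m + m * d))
      = g * p + g * p * d + g * (star m * m - p + (star m * m - p) * d) := by noncomm_ring
    _ = g + g * (star m * m - p + d + (star m * m - p) * d) := by
      rw [hg]
      noncomm_ring
    _ = g := by rw [hd, mul_zero, add_zero]

lemma exists_right_inverse_of_norm_sub_le {g g' y : B} (hg1 : ‖g‖ ≤ 1)
    (hg' : g' * g = g') (h : ‖star y * y - g * g‖ ≤ 1 / 2) :
    ‖y‖ ≤ 2 ∧ ∃ t, g' * (star y * (y + y * t)) = g' ∧ ‖y + y * t‖ ≤ 4 := by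
  have hy : ‖y‖ ≤ 2 := by
    have hsq : ‖y‖ * ‖y‖ ≤ 1 / 2 + 1 * 1 := calc
      ‖y‖ * ‖y‖ = ‖star y * y - g * g + g * g‖ := by
        rw [sub_add_cancel, CStarRing.norm_star_mul_self]
      _ ≤ 1 / 2 + 1 * 1 := (norm_add_le _ _).trans <| by
        gcongr
        exact (norm_mul_le g g).trans (by gcongr)
    nlinarith
  obtain ⟨t, ht⟩ := exists_quasiInverse (h.trans_lt (by norm_num))
  have ht1 : ‖t‖ ≤ 1 := (norm_quasiInverse_le ht h (by norm_num)).trans_eq (by norm_num)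
  refine ⟨hy, t, ?_, ?_⟩
  · calc g' * (star y * (y + y * t))
        = g' * g * g + g' * g * g * t + g' * (star y * y - g * g + (star y * y - g * g) * t) := by
          noncomm_ring
      _ = g' + g' * (star y * y - g * g + t + (star y * y - g * g) * t) := by
        rw [hg', hg']
        noncomm_ring
      _ = g' := by rw [ht, mul_zero, add_zero]
  · calc ‖y + y * t‖ ≤ ‖y‖ + ‖y‖ * ‖t‖ := (norm_add_le _ _).trans (by gcongr; exact norm_mul_le _ _)
      _ ≤ 2 + 2 * 1 := by gcongr
      _ = 4 := by norm_num

/- With `m = r s` and `k = m (1 + d)` such that `m* k` is a unit for `g₂`, the operator `k g₂ m*` is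
an oblique projection fixing the piece `y = m g₁`. -/
lemma CuntzLE.exists_isCarving {p g₂ g₁ g₀ r : B} (h : CuntzLE p (star r * r))
    (hg₁ : star g₁ = g₁) (hg₁n : ‖g₁‖ ≤ 1) (h₂ : g₂ * p = g₂) (h₁ : g₁ * g₂ = g₁)
    (h₀ : g₀ * g₁ = g₀) : ∃ r' y Y, IsCarving g₀ g₂ r r' y Y := by
  obtain ⟨s, hs⟩ := h.exists_norm_sub_lt one_half_pos
  obtain ⟨d, hd⟩ := exists_mul_star_mul_eq_self (hs.trans one_half_lt_one)
  set m := r * s with hm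
  set k := m + m * d with hk
  have hgp : g₁ * p = g₁ := by rw [← h₁, mul_assoc, h₂]
  have hstar : star (m * g₁) = g₁ * star m := by rw [star_mul, hg₁]
  have hnear : ‖star (m * g₁) * (m * g₁) - g₁ * g₁‖ ≤ 1 / 2 := calc
    ‖star (m * g₁) * (m * g₁) - g₁ * g₁‖ = ‖g₁ * (star m * m - p) * g₁‖ := by
      rw [hstar, mul_sub, hgp, sub_mul]
      simp only [mul_assoc]
    _ ≤ ‖g₁‖ * ‖star m * m - p‖ * ‖g₁‖ := norm_mul₃_le
    _ ≤ 1 * (1 / 2) * 1 := by gcongr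
    _ = 1 / 2 := by norm_num
  obtain ⟨hy, t, hYy, hY⟩ := exists_right_inverse_of_norm_sub_le hg₁n h₀ hnear
  have hproj : star (m * g₁) * (k * g₂ * star m) = star (m * g₁) := calc
    star (m * g₁) * (k * g₂ * star m) = g₁ * (star m * k) * g₂ * star m := by
      simp only [hstar, mul_assoc]
    _ = star (m * g₁) := by rw [hd g₁ hgp, h₁, hstar]
  refine ⟨r - k * g₂ * star m * r, m * g₁, m * g₁ + m * g₁ * t, ?_, ?_, ⟨t, rfl⟩, ?_, hYy, hy, hY,
    ⟨k, star m * r, ?_⟩⟩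
  · exact ⟨-((s + s * d) * g₂ * star m * r), by rw [hk, hm]; noncomm_ring⟩
  · exact ⟨s * g₁, mul_assoc _ _ _⟩
  · rw [mul_sub, ← mul_assoc, hproj, sub_self]
  · simp only [mul_assoc, sub_add_cancel]

namespace IsCarving

variable {g h r r' y Y e f : B}

lemma mul_remainder_eq_zero (hc : IsCarving g h r r' y Y) (he : e * r = 0) : e * r' = 0 := by
  obtain ⟨t, rfl⟩ := hc.remainder_eq
  rw [mul_add, ← mul_assoc, he, zero_mul, add_zero]

lemma mul_piece_eq_zero (hc : IsCarving g h r r' y Y) (he : e * r = 0) : e * y = 0 := by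
  obtain ⟨t, rfl⟩ := hc.piece_eq
  rw [← mul_assoc, he, zero_mul]

lemma mul_inverse_eq_zero (hc : IsCarving g h r r' y Y) (he : e * y = 0) : e * Y = 0 := by
  obtain ⟨t, rfl⟩ := hc.inverse_eq
  rw [mul_add, ← mul_assoc, he, zero_mul, add_zero]

lemma mul_remainder_eq_self (hc : IsCarving g h r r' y Y) (hf : f * r = r) : f * r' = r' := by
  obtain ⟨t, rfl⟩ := hc.remainder_eq
  rw [mul_add, ← mul_assoc, hf]

lemma mul_inverse_eq_self (hc : IsCarving g h r r' y Y) (hf : f * r = r) : f * Y = Y := by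
  obtain ⟨u, rfl⟩ := hc.piece_eq
  obtain ⟨t, rfl⟩ := hc.inverse_eq
  rw [mul_add, ← mul_assoc f (r * u) t, ← mul_assoc f r u, hf]

lemma rank_le {D : Type*} [NonUnitalCStarAlgebra D] [PartialOrder B] [StarOrderedRing B]
    (hc : IsCarving g h r r' y Y) (SB : Stabilization D B) (τ : QuasiTrace B) :
    τ.rank r ≤ τ.rank r' + τ.rank h := by
  obtain ⟨b, c, hr⟩ := hc.exists_eq_add
  calc τ.rank r ≤ τ.rank r' + τ.rank (b * h * c) := by
        conv_lhs => rw [hr]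
        exact SB.rank_add_le τ _ _
    _ ≤ τ.rank r' + τ.rank h := by
      gcongr
      exact (QuasiTrace.rank_mul_le_left _ _).trans (QuasiTrace.rank_mul_le_right _ _)

end IsCarving

section Sequence

variable {g h r y Y : ℕ → B}

lemma star_mul_eq_zero_of_isCarving_seq
    (hc : ∀ k, IsCarving (g k) (h k) (r k) (r (k + 1)) (y k) (Y k)) {j k : ℕ} (hjk : j ≠ k) :
    star (y j) * Y k = 0 := by
  have hremainder {j k : ℕ} (hlt : j < k) : star (y j) * r k = 0 := by
    induction k, hlt using Nat.le_induction with
    | base => exact (hc j).star_piece_mul_remainder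
    | succ k _ ih => exact (hc k).mul_remainder_eq_zero ih
  have hpiece {j k : ℕ} (hlt : j < k) : star (y j) * y k = 0 :=
    (hc k).mul_piece_eq_zero (hremainder hlt)
  refine (hc k).mul_inverse_eq_zero ?_
  rcases hjk.lt_or_gt with hlt | hgt
  · exact hpiece hlt
  · simpa using congrArg star (hpiece hgt)

lemma mul_eq_self_of_isCarving_seq
    (hc : ∀ k, IsCarving (g k) (h k) (r k) (r (k + 1)) (y k) (Y k)) {f : B}
    (hf : f * r 0 = r 0) (k : ℕ) : f * Y k = Y k := by
  have hremainder (k : ℕ) : f * r k = r k := by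
    induction k with
    | zero => exact hf
    | succ k ih => exact (hc k).mul_remainder_eq_self ih
  exact (hc k).mul_inverse_eq_self (hremainder k)

lemma Stabilization.exists_isCarving_seq {D : Type*} [NonUnitalCStarAlgebra D] [PartialOrder B]
    [StarOrderedRing B] (SB : Stabilization D B) (S : Set (QuasiTrace B)) (r₀ : B)
    (hstep : ∀ k r, (∀ τ ∈ S, τ.rank r₀ ≤ τ.rank r + ∑ j ∈ Finset.range k, τ.rank (h j)) →
      ∃ r' y Y, IsCarving (g k) (h k) r r' y Y) :
    ∃ r y Y : ℕ → B, r 0 = r₀ ∧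
      ∀ k, IsCarving (g k) (h k) (r k) (r (k + 1)) (y k) (Y k) := by
  choose! r' y Y hc using hstep
  let r : ℕ → B := fun k => Nat.rec r₀ r' k
  have hrank (k : ℕ) :
      ∀ τ ∈ S, τ.rank r₀ ≤ τ.rank (r k) + ∑ j ∈ Finset.range k, τ.rank (h j) := by
    induction k with
    | zero => simp [r]
    | succ k ih =>
      intro τ hτ
      rw [Finset.sum_range_succ_comm, ← add_assoc]
      exact (ih τ hτ).trans (add_le_add_left ((hc k (r k) ih).rank_le SB τ) _)
  exact ⟨r, fun k => y k (r k), fun k => Y k (r k), rfl, fun k => hc k (r k) (hrank k)⟩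

end Sequence

end Carving

section BumpCarving

variable [PartialOrder B] [StarOrderedRing B]

lemma StrictComparison.cuntzLE_of_forall_mem (hB : StrictComparison B) {S : Set (QuasiTrace B)}
    (hS : ∀ τ : QuasiTrace B, ∃ c : ℝ≥0, ∃ σ ∈ S, ∀ a, 0 ≤ a → τ.toFun a = c * σ.toFun a)
    {a b : B} (ha : 0 ≤ a) (hb : 0 ≤ b) (h : ∀ σ ∈ S, dTau σ a < dTau σ b) : CuntzLE a b := by
  refine hB a b ha hb fun τ hτ => ?_
  obtain ⟨c, σ, hσ, hτσ⟩ := hS τ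
  have hc : c ≠ 0 := by
    rintro rfl
    refine hτ fun d => ?_
    by_cases hd : 0 ≤ d
    · simp [hτσ d hd]
    · exact τ.zero_of_not_nonneg d hd
  have hdTau (d : B) : dTau τ d = c * dTau σ d := by
    rw [dTau, dTau, ENNReal.mul_iSup]
    exact iSup_congr fun n => hτσ _ (fEps_nonneg _ _)
  rw [hdTau, hdTau]
  exact (ENNReal.mul_lt_mul_iff_right (by simpa using hc) ENNReal.coe_ne_top).2 (h σ hσ)

lemma CuntzLE.exists_isCarving_bump {a r : B} {i : ℕ}
    (h : CuntzLE (bump i (i + 12) a) (star r * r)) :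
    ∃ r' y Y, IsCarving (bump (i + 3) (i + 9) a) (bump (i + 1) (i + 11) a) r r' y Y :=
  h.exists_isCarving (g₁ := bump (i + 2) (i + 10) a) (star_bump a)
    (norm_bump_le_one a (by lia)) (bump_mul_bump_outer a (by lia) (by lia) (by lia))
    (bump_mul_bump_outer a (by lia) (by lia) (by lia))
    (bump_mul_bump_outer a (by lia) (by lia) (by lia))

lemma QuasiTrace.sum_rank_bump_le (τ : QuasiTrace B) (a : B) (n : ℕ) :
    ∑ k ∈ Finset.range n, τ.rank (bump (6 * k + 1) (6 * k + 11) a) ≤ 2 * dTau τ a := calc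
  ∑ k ∈ Finset.range n, τ.rank (bump (6 * k + 1) (6 * k + 11) a)
      ≤ ∑ k ∈ Finset.range n, τ.toFun (bump (6 * k) (6 * (k + 2)) a) :=
    Finset.sum_le_sum fun k _ => rank_le_toFun_of_mul_eq_self (bump_nonneg a (by lia))
      (bump_mul_bump_outer a (by lia) (by lia) (by lia))
  _ ≤ 2 * dTau τ a :=
    τ.sum_toFun_bump_le a (strictMono_mul_left_of_pos (by norm_num : 0 < 6)) n

lemma Stabilization.exists_isCarving_bump_seq {D : Type*} [NonUnitalCStarAlgebra D]
    (SB : Stabilization D B) (hB : StrictComparison B) {S : Set (QuasiTrace B)}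
    (hS : ∀ τ : QuasiTrace B, ∃ c : ℝ≥0, ∃ σ ∈ S, ∀ a, 0 ≤ a → τ.toFun a = c * σ.toFun a)
    {a r₀ : B} (h : ∀ τ ∈ S, 3 * dTau τ a < τ.rank r₀) :
    ∃ r y Y : ℕ → B, r 0 = r₀ ∧ ∀ k, IsCarving (bump (6 * k + 3) (6 * (k + 1) + 3) a)
      (bump (6 * k + 1) (6 * k + 11) a) (r k) (r (k + 1)) (y k) (Y k) := by
  refine SB.exists_isCarving_seq S r₀ fun k r hr => CuntzLE.exists_isCarving_bump <|
    hB.cuntzLE_of_forall_mem hS (bump_nonneg a (by lia)) (star_mul_self_nonneg r) fun τ hτ => ?_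
  refine (τ.dTau_bump_le a (by lia)).trans_lt ?_
  by_contra! hle
  refine (h τ hτ).not_ge ?_
  calc τ.rank r₀ ≤ dTau τ a + 2 * dTau τ a :=
        (hr τ hτ).trans (add_le_add hle (τ.sum_rank_bump_le a k))
    _ = 3 * dTau τ a := by ring

end BumpCarving

section Factorization

lemma hasSum_mul_of_mul_eq_zero {R ι : Type*} [NonUnitalNonAssocSemiring R] [TopologicalSpace R]
    [IsTopologicalSemiring R] [T2Space R] {u v : ι → R} {s t : R} (hu : HasSum u s)
    (hv : HasSum v t) (h : ∀ i j, i ≠ j → u i * v j = 0) :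
    HasSum (fun i => u i * v i) (s * t) := by
  have hmul (i : ι) : u i * t = u i * v i :=
    (hv.mul_left (u i)).unique (hasSum_single i fun j hj => h i j hj.symm)
  simpa only [hmul] using hu.mul_right t

variable {g h r y Y : ℕ → B}

lemma summable_smul_inverse
    (hc : ∀ k, IsCarving (g k) (h k) (r k) (r (k + 1)) (y k) (Y k)) :
    Summable fun k => (1 / 2 : ℝ) ^ k • Y k := by
  refine .of_norm_bounded (summable_geometric_two.mul_right 4) fun k => ?_
  rw [norm_smul, Real.norm_of_nonneg (by positivity)]
  exact mul_le_mul_of_nonneg_left (hc k).norm_inverse_le (by positivity)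

variable [PartialOrder B] [StarOrderedRing B] {m : ℕ → ℕ}

lemma tendsto_sum_mul_bump (hm : StrictMono m) (x : B) :
    Tendsto (fun n => ∑ k ∈ Finset.range n, x * bump (m k) (m (k + 1)) (star x * x)) atTop
      (𝓝 (x - x * fEps ((1 / 16) ^ m 0) (star x * x))) := by
  have hlim : Tendsto (fun n => x * fEps ((1 / 16) ^ n) (star x * x)) atTop (𝓝 x) := by
    rw [tendsto_iff_norm_sub_tendsto_zero]
    refine squeeze_zero (fun _ => norm_nonneg _) (fun n => ?_)
      (tendsto_pow_atTop_nhds_zero_of_lt_one (r := (1 / 4 : ℝ)) (by norm_num) (by norm_num))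
    rw [norm_sub_rev]
    exact norm_sub_mul_fEps_pow_le x n
  refine ((hlim.comp hm.tendsto_atTop).sub_const _).congr fun n => ?_
  simp only [bump, mul_sub]
  exact (Finset.sum_range_sub (fun k => x * fEps ((1 / 16) ^ m k) (star x * x)) n).symm

lemma summable_smul_mul_star_piece {x : B} (hm : StrictMono m)
    (hc : ∀ k, IsCarving (bump (m k) (m (k + 1)) (star x * x)) (h k) (r k) (r (k + 1)) (y k)
      (Y k)) :
    Summable fun k => (2 : ℝ) ^ k • (x * bump (m k) (m (k + 1)) (star x * x) * star (y k)) := by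
  refine .of_norm_bounded (summable_geometric_two.mul_right 4) fun k => ?_
  rw [norm_smul, Real.norm_of_nonneg (by positivity)]
  calc (2 : ℝ) ^ k * ‖x * bump (m k) (m (k + 1)) (star x * x) * star (y k)‖
      ≤ 2 ^ k * (2 * (1 / 4) ^ k * 2) := by
        gcongr
        refine norm_mul_le_of_le ((norm_mul_bump_le x (hm k.lt_succ_self).le).trans ?_)
          ((norm_star _).trans_le (hc k).norm_piece_le)
        exact mul_le_mul_of_nonneg_left
          (pow_le_pow_of_le_one (by norm_num) (by norm_num) hm.le_apply) zero_le_two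
    _ = (2 * (1 / 4)) ^ k * 4 := by rw [mul_pow]; ring
    _ = (1 / 2) ^ k * 4 := by norm_num

lemma mem_pedersen_of_isCarving_seq {x : B} (hm : StrictMono m)
    (hc : ∀ k, IsCarving (bump (m k) (m (k + 1)) (star x * x)) (h k) (r k) (r (k + 1)) (y k)
      (Y k)) {f : B} (hf : f ∈ pedersen B) (hfr : f * r 0 = r 0) : x ∈ pedersen B := by
  set u : ℕ → B := fun k => (2 : ℝ) ^ k • (x * bump (m k) (m (k + 1)) (star x * x) * star (y k))
  set v : ℕ → B := fun k => (1 / 2 : ℝ) ^ k • Y k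
  have hu : Summable u := summable_smul_mul_star_piece hm hc
  have hv : Summable v := summable_smul_inverse hc
  have horth (j k : ℕ) (hjk : j ≠ k) : u j * v k = 0 := by
    simp only [u, v, smul_mul_assoc, mul_smul_comm, mul_assoc,
      star_mul_eq_zero_of_isCarving_seq hc hjk, mul_zero, smul_zero]
  have hdiag (k : ℕ) : u k * v k = x * bump (m k) (m (k + 1)) (star x * x) := by
    simp only [u, v, smul_mul_assoc, mul_smul_comm, smul_smul, mul_assoc,
      (hc k).mul_star_piece_mul_inverse, ← mul_pow]
    norm_num
  have hT : (∑' k, v k) ∈ pedersen B := by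
    have hfT : f * ∑' k, v k = ∑' k, v k := by
      rw [← hv.tsum_mul_left]
      exact tsum_congr fun k => by
        rw [mul_smul_comm, mul_eq_self_of_isCarving_seq hc hfr]
    exact hfT ▸ pedersen_mul_right hf _
  have hZT : (∑' k, u k) * ∑' k, v k = x - x * fEps ((1 / 16) ^ m 0) (star x * x) := by
    have hsum := hasSum_mul_of_mul_eq_zero hu.hasSum hv.hasSum horth
    simp only [hdiag] at hsum
    exact tendsto_nhds_unique hsum.tendsto_sum_nat (tendsto_sum_mul_bump hm x)
  rw [← sub_add_cancel x (x * fEps ((1 / 16) ^ m 0) (star x * x)), ← hZT]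
  exact pedersen_add (pedersen_mul_left hT _) <|
    pedersen_mul_left (fEps_mem_pedersen (by positivity) (star_mul_self_nonneg x)) x

end Factorization

theorem mem_pedersen_of_bounded_dimension_general [PartialOrder B] [StarOrderedRing B]
    {D : Type*} [NonUnitalCStarAlgebra D] (SB : Stabilization D B) (hD : IsSimpleCStar D)
    (hB : StrictComparison B) {S : Set (QuasiTrace B)} (hScompact : IsCompact S)
    (hSnonzero : ∀ τ ∈ S, ¬ τ.IsZero)
    (hScone : ∀ τ : QuasiTrace B, ∃ c : ℝ≥0, ∃ σ ∈ S, ∀ a, 0 ≤ a → τ.toFun a = c * σ.toFun a)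
    {x : B} (hbd : (⨆ τ ∈ S, dTau τ (star x * x)) < ∞) : x ∈ pedersen B := by
  obtain ⟨f, hf, r₀, hfr, hrank⟩ := SB.exists_mem_pedersen_mul_eq_self_forall_lt_rank hD
    hScompact hSnonzero (ENNReal.mul_lt_top (by norm_num : (3 : ℝ≥0∞) < ∞) hbd)
  obtain ⟨r, y, Y, rfl, hc⟩ := SB.exists_isCarving_bump_seq hB hScone (a := star x * x) (r₀ := r₀)
    fun τ hτ => (hrank τ hτ).trans_le' <| by
      gcongr
      exact le_iSup₂ (f := fun σ (_ : σ ∈ S) => dTau σ (star x * x)) τ hτ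
  exact mem_pedersen_of_isCarving_seq (m := fun k => 6 * k + 3) (fun i j hij => by lia) hc hf hfr

/-- **Corollary.** Let `A` be a σ-unital simple C*-algebra with `QT̃(A) ≠ {0}`, strict
comparison and surjective `Γ`, and let `S ⊆ QT̃(A) \ {0}` be a compact subset with
`ℝ₊ · S = QT̃(A)`.  If `x ∈ A ⊗ K` satisfies `sup {d_τ(x*x) : τ ∈ S} < ∞`, then
`x ∈ Ped(A ⊗ K)`. -/
theorem mem_pedersen_of_bounded_dimension
    (SB : Stabilization A W)
    (hσ : SigmaUnital A) (hsimple : IsSimpleCStar A)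
    (hqt : ∃ τ : QuasiTrace W, ¬ τ.IsZero)
    (hsc : StrictComparison W) (hΓ : GammaSurjective W)
    (S : Set (QuasiTrace W)) (hScompact : IsCompact S)
    (hSnonzero : ∀ τ ∈ S, ¬ τ.IsZero)
    (hScone : ∀ τ : QuasiTrace W, ∃ r : ℝ, 0 ≤ r ∧ ∃ σ ∈ S,
      ∀ a : W, 0 ≤ a → τ.toFun a = ENNReal.ofReal r * σ.toFun a)
    (x : W) (hbd : (⨆ τ ∈ S, dTau τ (star x * x)) < ∞) :
    x ∈ pedersen W := by
  refine mem_pedersen_of_bounded_dimension_general SB hsimple hsc hScompact hSnonzero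
    (fun τ => ?_) hbd
  obtain ⟨c, -, σ, hσS, hτσ⟩ := hScone τ
  exact ⟨c.toNNReal, σ, hσS, hτσ⟩

end Paper
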